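/- arXiv:2403.14644 — 2 statements merged into one kernel-verified Lean document; each statement's English description precedes it below -/
import Mathlib

section
/- Newman's value for Υ³ at π/2: −∫₀^{π/2} (π/2 − t) · log(sin t) dt = (π²/8) · log 2 + (7/16) · ζ(3). -/
open Real MeasureTheory

/-- The Riemann zeta value `ζ k = ∑_{m ≥ 1} 1 / m ^ k`. -/
noncomputable def zetaVal (k : ℕ) : ℝ := ∑' m : ℕ+, 1 / (m : ℝ) ^ k

/-- The point `r e^{2it}`. -/
noncomputable def upsPt (r t : ℝ) : ℂ := (r : ℂ) * Complex.exp ((2 * t : ℝ) * Complex.I)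

lemma upsPt_norm (r t : ℝ) (hr : 0 ≤ r) : ‖upsPt r t‖ = r := by
  rw [upsPt, norm_mul, Complex.norm_exp_ofReal_mul_I, mul_one, Complex.norm_real,
    Real.norm_of_nonneg hr]

lemma upsPt_pow_re (r t : ℝ) (n : ℕ) :
    (upsPt r t ^ n / (n : ℂ)).re = r ^ n * Real.cos (2 * n * t) / n := by
  have h : upsPt r t ^ n = ((r ^ n : ℝ) : ℂ) * Complex.exp ((2 * n * t : ℝ) * Complex.I) := by
    rw [upsPt, mul_pow, ← Complex.exp_nat_mul]
    push_cast
    ring_nf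
  rw [h, Complex.div_natCast_re, Complex.re_ofReal_mul, Complex.exp_ofReal_mul_I_re]

lemma upsPt_hasSum (r t : ℝ) (hr : 0 ≤ r) (hr1 : r < 1) :
    HasSum (fun n : ℕ => r ^ n * Real.cos (2 * n * t) / n) (-Real.log ‖1 - upsPt r t‖) := by
  have h := Complex.hasSum_re (Complex.hasSum_taylorSeries_neg_log
    (z := upsPt r t) (by rw [upsPt_norm r t hr]; exact hr1))
  simp only [upsPt_pow_re, Complex.neg_re, Complex.log_re] at h
  exact h

lemma upsPt_sq (r t : ℝ) :
    ‖1 - upsPt r t‖ ^ 2 = (1 - r) ^ 2 + 4 * r * Real.sin t ^ 2 := by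
  rw [← Complex.normSq_eq_norm_sq, Complex.normSq_apply]
  have h1 : (1 - upsPt r t).re = 1 - r * Real.cos (2 * t) := by
    rw [upsPt, Complex.sub_re, Complex.re_ofReal_mul, Complex.exp_ofReal_mul_I_re, Complex.one_re]
  have h2 : (1 - upsPt r t).im = - (r * Real.sin (2 * t)) := by
    rw [upsPt, Complex.sub_im, Complex.im_ofReal_mul, Complex.exp_ofReal_mul_I_im, Complex.one_im]
    ring
  rw [h1, h2]
  have h3 := Real.sin_sq_add_cos_sq (2 * t)
  have h4 : Real.cos (2 * t) = 1 - 2 * Real.sin t ^ 2 := by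
    rw [Real.cos_two_mul, Real.cos_sq']; ring
  have h5 : Real.sin (2 * t) ^ 2 = 1 - Real.cos (2 * t) ^ 2 := by linarith
  have : -(r * Real.sin (2 * t)) * -(r * Real.sin (2 * t)) = r ^ 2 * Real.sin (2 * t) ^ 2 := by ring
  rw [this, h5, h4]; ring

lemma ups_int (n : ℕ) :
    ∫ t in (0:ℝ)..(π / 2), (π / 2 - t) * (Real.cos (2 * n * t) / n)
      = (1 - (-1) ^ n) / (4 * (n : ℝ) ^ 3) := by
  rcases Nat.eq_zero_or_pos n with rfl | hn
  · simp
  have hn' : (n : ℝ) ≠ 0 := by positivity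
  have hd : ∀ t ∈ Set.uIcc (0:ℝ) (π / 2), HasDerivAt (fun t : ℝ =>
      (π / 2 - t) * Real.sin (2 * n * t) / (2 * n ^ 2) - Real.cos (2 * n * t) / (4 * n ^ 3))
      ((π / 2 - t) * (Real.cos (2 * n * t) / n)) t := by
    intro t _
    have h0 : HasDerivAt (fun t : ℝ => 2 * n * t) (2 * n : ℝ) t := by
      simpa using (hasDerivAt_id t).const_mul (2 * n : ℝ)
    have h1 := ((((hasDerivAt_id t).const_sub (π / 2)).mul h0.sin).div_const (2 * n ^ 2 : ℝ)).sub
      (h0.cos.div_const (4 * n ^ 3 : ℝ))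
    refine h1.congr_deriv ?_
    simp only [id]
    field_simp
    ring
  rw [intervalIntegral.integral_eq_sub_of_hasDerivAt hd
    (Continuous.intervalIntegrable (by fun_prop) _ _)]
  have : (2 * n * (π / 2) : ℝ) = n * π := by ring
  rw [this, Real.cos_nat_mul_pi]
  simp
  ring

lemma ups_reg (r : ℝ) (hr : 0 ≤ r) (hr1 : r < 1) :
    HasSum (fun n : ℕ => r ^ n * ((1 - (-1) ^ n) / (4 * (n : ℝ) ^ 3)))
      (∫ t in (0:ℝ)..(π / 2), (π / 2 - t) * (-Real.log ‖1 - upsPt r t‖)) := by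
  have key := intervalIntegral.hasSum_integral_of_dominated_convergence
    (μ := volume) (a := 0) (b := π / 2)
    (F := fun (n : ℕ) (t : ℝ) => (π / 2 - t) * (r ^ n * Real.cos (2 * n * t) / n))
    (f := fun t => (π / 2 - t) * (-Real.log ‖1 - upsPt r t‖))
    (fun n _ => π / 2 * r ^ n)
    (fun n => Continuous.aestronglyMeasurable (by fun_prop))
    ?_ ?_ ?_ ?_
  · have e : (fun n : ℕ => r ^ n * ((1 - (-1) ^ n) / (4 * (n : ℝ) ^ 3))) = fun n : ℕ =>
        ∫ t in (0:ℝ)..(π / 2), (π / 2 - t) * (r ^ n * Real.cos (2 * n * t) / n) := by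
      funext n
      rw [← ups_int n, ← intervalIntegral.integral_const_mul]
      congr 1; ext t; ring
    rw [e]
    exact key
  · intro n
    refine Filter.Eventually.of_forall fun t ht => ?_
    rw [Set.uIoc_of_le (by positivity)] at ht
    rw [norm_mul]
    have hp : 0 ≤ r ^ n := by positivity
    gcongr
    · rw [Real.norm_eq_abs, abs_le]; constructor <;> linarith [ht.1, ht.2]
    · rw [norm_div, norm_mul, Real.norm_of_nonneg hp, Real.norm_natCast]
      have hc : ‖Real.cos (2 * n * t)‖ ≤ 1 := Real.abs_cos_le_one _
      rcases Nat.eq_zero_or_pos n with rfl | hn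
      · simp
      · have : (1:ℝ) ≤ n := by exact_mod_cast hn
        rw [div_le_iff₀ (by positivity)]
        calc r ^ n * ‖Real.cos (2 * n * t)‖ ≤ r ^ n * 1 := by gcongr
          _ ≤ r ^ n * n := by gcongr
  · exact Filter.Eventually.of_forall fun t _ => (summable_geometric_of_lt_one hr hr1).mul_left _
  · exact intervalIntegrable_const
  · exact Filter.Eventually.of_forall fun t _ => (upsPt_hasSum r t hr hr1).mul_left _

lemma ups_summable : Summable (fun n : ℕ => 1 / (n : ℝ) ^ 3) :=
  Real.summable_one_div_nat_pow.mpr (by norm_num)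

lemma zetaVal_three : zetaVal 3 = ∑' n : ℕ, 1 / (n : ℝ) ^ 3 := by
  have h := tsum_pnat_eq_tsum_succ (f := fun n : ℕ => 1 / (n : ℝ) ^ 3)
  rw [ups_summable.tsum_eq_zero_add]
  simpa [zetaVal] using h

lemma ups_sum : ∑' n : ℕ, ((1 - (-1) ^ n) / (4 * (n : ℝ) ^ 3)) = 7 / 16 * zetaVal 3 := by
  rw [zetaVal_three]
  have hs := ups_summable
  have he : Summable (fun k : ℕ => 1 / ((2 * k : ℕ) : ℝ) ^ 3) :=
    hs.comp_injective (i := fun k : ℕ => 2 * k) (fun a b h => by simpa using h)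
  have ho : Summable (fun k : ℕ => 1 / ((2 * k + 1 : ℕ) : ℝ) ^ 3) :=
    hs.comp_injective (i := fun k : ℕ => 2 * k + 1) (fun a b h => by simpa using h)
  have h1 := tsum_even_add_odd (f := fun n : ℕ => 1 / (n : ℝ) ^ 3) he ho
  have h2 : ∑' k : ℕ, 1 / ((2 * k : ℕ) : ℝ) ^ 3 = 1 / 8 * ∑' n : ℕ, 1 / (n : ℝ) ^ 3 := by
    rw [← tsum_mul_left]
    congr 1; ext k; push_cast; rw [mul_pow]; ring
  have e1 : (fun k : ℕ => (1 - (-1) ^ (2 * k)) / (4 * ((2 * k : ℕ) : ℝ) ^ 3)) = fun _ => 0 := by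
    ext k; simp
  have e2 : (fun k : ℕ => (1 - (-1) ^ (2 * k + 1)) / (4 * ((2 * k + 1 : ℕ) : ℝ) ^ 3))
      = fun k : ℕ => 1 / 2 * (1 / ((2 * k + 1 : ℕ) : ℝ) ^ 3) := by
    ext k
    have : ((-1 : ℝ)) ^ (2 * k + 1) = -1 := by rw [pow_succ, pow_mul]; simp
    rw [this]; field_simp; norm_num
  have h3 := tsum_even_add_odd (f := fun n : ℕ => ((1 - (-1) ^ n) / (4 * (n : ℝ) ^ 3)))
    (by rw [e1]; exact summable_zero) (by rw [e2]; exact ho.mul_left _)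
  rw [← h3, e1, e2, tsum_mul_left]
  simp only [tsum_zero]
  linarith

lemma ups_lim_sum : Filter.Tendsto
    (fun r : ℝ => ∑' n : ℕ, r ^ n * ((1 - (-1) ^ n) / (4 * (n : ℝ) ^ 3)))
    (nhdsWithin 1 (Set.Iio 1)) (nhds (7 / 16 * zetaVal 3)) := by
  rw [← ups_sum]
  refine tendsto_tsum_of_dominated_convergence (bound := fun n : ℕ => 1 / (n : ℝ) ^ 3)
    ups_summable ?_ ?_
  · intro n
    have : ContinuousAt (fun r : ℝ => r ^ n * ((1 - (-1) ^ n) / (4 * (n : ℝ) ^ 3))) 1 := by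
      fun_prop
    simpa using this.tendsto.mono_left nhdsWithin_le_nhds
  · filter_upwards [Ioo_mem_nhdsLT (show (0:ℝ) < 1 by norm_num)] with r hr n
    rw [norm_mul, norm_pow, Real.norm_of_nonneg hr.1.le, norm_div]
    have a1 : r ^ n ≤ 1 := pow_le_one₀ hr.1.le hr.2.le
    have a2 : ‖(1 - (-1) ^ n : ℝ)‖ ≤ 2 := by
      rcases neg_one_pow_eq_or ℝ n with h | h <;> rw [h] <;> norm_num
    have a3 : ‖4 * (n : ℝ) ^ 3‖ = 4 * (n : ℝ) ^ 3 := Real.norm_of_nonneg (by positivity)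
    rw [a3]
    calc r ^ n * (‖(1 - (-1) ^ n : ℝ)‖ / (4 * (n : ℝ) ^ 3)) ≤ 1 * (4 / (4 * (n : ℝ) ^ 3)) := by
          gcongr; linarith
      _ = 1 / (n : ℝ) ^ 3 := by rw [one_mul, div_mul_eq_div_div, div_self (by norm_num)]

lemma ups_lim_int : Filter.Tendsto
    (fun r : ℝ => ∫ t in (0:ℝ)..(π / 2), (π / 2 - t) * (-Real.log ‖1 - upsPt r t‖))
    (nhdsWithin 1 (Set.Iio 1))
    (nhds (∫ t in (0:ℝ)..(π / 2), (π / 2 - t) * (-(Real.log 2 + Real.log (Real.sin t))))) := by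
  refine intervalIntegral.tendsto_integral_filter_of_dominated_convergence
    (fun t => π / 2 * (Real.log 2 + |Real.log (Real.sin t)|)) ?_ ?_ ?_ ?_
  · refine Filter.Eventually.of_forall fun r => Measurable.aestronglyMeasurable ?_
    have : Measurable fun t => ‖1 - upsPt r t‖ := by
      apply Continuous.measurable; unfold upsPt; fun_prop
    fun_prop
  · filter_upwards [Ioo_mem_nhdsLT (show (1/2:ℝ) < 1 by norm_num)] with r hr
    refine Filter.Eventually.of_forall fun t ht => ?_
    rw [Set.uIoc_of_le (by positivity)] at ht
    have hs : 0 < Real.sin t := Real.sin_pos_of_pos_of_lt_pi ht.1 (by linarith [ht.2, Real.pi_pos])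
    have hsq := upsPt_sq r t
    have hlow : Real.sin t ≤ ‖1 - upsPt r t‖ := by
      refine (sq_le_sq₀ hs.le (norm_nonneg _)).mp ?_
      rw [hsq]; nlinarith [hr.1, sq_nonneg (1 - r), sq_nonneg (Real.sin t)]
    have hup : ‖1 - upsPt r t‖ ≤ 2 := by
      refine (norm_sub_le _ _).trans ?_
      rw [upsPt_norm r t (by linarith [hr.1]), norm_one]; linarith [hr.2]
    rw [norm_mul]
    gcongr
    · rw [Real.norm_eq_abs, abs_le]; constructor <;> linarith [ht.1, ht.2]
    · rw [norm_neg, Real.norm_eq_abs, abs_le]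
      have l1 := Real.log_le_log hs hlow
      have l2 := Real.log_le_log (hs.trans_le hlow) hup
      have l3 := Real.log_nonneg (show (1:ℝ) ≤ 2 by norm_num)
      have l4 := neg_abs_le (Real.log (Real.sin t))
      have l5 := abs_nonneg (Real.log (Real.sin t))
      constructor <;> linarith
  · have h : IntervalIntegrable (fun t => Real.log (Real.sin t)) volume 0 (π / 2) :=
      intervalIntegrable_log_sin
    exact (intervalIntegrable_const.add h.abs).const_mul _
  · refine Filter.Eventually.of_forall fun t ht => ?_
    rw [Set.uIoc_of_le (by positivity)] at ht
    have hs : 0 < Real.sin t := Real.sin_pos_of_pos_of_lt_pi ht.1 (by linarith [ht.2, Real.pi_pos])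
    have hn : ‖1 - upsPt 1 t‖ = 2 * Real.sin t := by
      have := upsPt_sq 1 t
      rw [← sq_eq_sq₀ (norm_nonneg _) (by positivity), this]; ring
    rw [← Real.log_mul (by norm_num) hs.ne', ← hn]
    have hne : ‖1 - upsPt 1 t‖ ≠ 0 := by rw [hn]; positivity
    have hc : ContinuousAt (fun r : ℝ => ‖1 - upsPt r t‖) 1 := by
      unfold upsPt; fun_prop
    exact (((hc.log hne).neg).tendsto.mono_left nhdsWithin_le_nhds).const_mul _

theorem upsilon_three_at_pi_div_two :
    -∫ t in (0:ℝ)..(π / 2), (π / 2 - t) * Real.log (Real.sin t) =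
      π ^ 2 / 8 * Real.log 2 + 7 / 16 * zetaVal 3 := by
  have h : ∫ t in (0:ℝ)..(π / 2), (π / 2 - t) * (-(Real.log 2 + Real.log (Real.sin t)))
      = 7 / 16 * zetaVal 3 := by
    refine tendsto_nhds_unique (ups_lim_int.congr' ?_) ups_lim_sum
    filter_upwards [Ioo_mem_nhdsLT (show (0:ℝ) < 1 by norm_num)] with r hr
    exact (ups_reg r hr.1.le hr.2).tsum_eq.symm
  have hi : IntervalIntegrable (fun t => (π / 2 - t) * Real.log (Real.sin t)) volume 0 (π / 2) := by
    have h : IntervalIntegrable (fun t => Real.log (Real.sin t)) volume 0 (π / 2) :=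
      intervalIntegrable_log_sin
    exact h.continuousOn_mul (by fun_prop)
  have h2 : ∫ t in (0:ℝ)..(π / 2), (π / 2 - t) * (-(Real.log 2 + Real.log (Real.sin t)))
      = (∫ t in (0:ℝ)..(π / 2), (π / 2 - t) * (-Real.log 2))
        - ∫ t in (0:ℝ)..(π / 2), (π / 2 - t) * Real.log (Real.sin t) := by
    rw [← intervalIntegral.integral_sub (Continuous.intervalIntegrable (by fun_prop) _ _) hi]
    congr 1; ext t; ring
  have h3 : ∫ t in (0:ℝ)..(π / 2), (π / 2 - t) * (-Real.log 2) = - (π ^ 2 / 8 * Real.log 2) := by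
    rw [intervalIntegral.integral_mul_const, intervalIntegral.integral_sub
      intervalIntegrable_const (Continuous.intervalIntegrable (by fun_prop) _ _)]
    rw [intervalIntegral.integral_const, integral_id, smul_eq_mul]
    ring
  linarith
end

section
/- Newman's value for Υ⁵ at π/2: −(1/6) · ∫₀^{π/2} (π/2 − t)³ · log(sin t) dt = −(31/256) · ζ(5) + (π²/32) · ζ(3) + (π⁴/384) · log 2. -/
open Real MeasureTheory

lemma hs_congr {f g : ℕ → ℝ} {a b : ℝ} (h : HasSum f a) (hf : g = f) (hb : b = a) :
    HasSum g b := by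
  rw [hf, hb]; exact h

/-- The squared distance `|1 - r e^{2it}|^2`. -/
noncomputable def qq (r t : ℝ) : ℝ := (1 - r) ^ 2 + 4 * r * Real.sin t ^ 2

/-- The coefficients of the final series. -/
noncomputable def bb (n : ℕ) : ℝ := π ^ 2 / 32 * (1 / (n : ℝ) ^ 3) -
  1 / 16 * ((1 - (-1) ^ n) / (n : ℝ) ^ 5)

lemma series_qq (r t : ℝ) (h0 : 0 < r) (h1 : r < 1) :
    HasSum (fun n : ℕ => r ^ n * Real.cos (2 * n * t) / n) (-(1 / 2) * Real.log (qq r t)) := by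
  have hz : ‖(r : ℂ) * Complex.exp ((2 * t : ℝ) * Complex.I)‖ < 1 := by
    rw [norm_mul, Complex.norm_exp_ofReal_mul_I, Complex.norm_real, Real.norm_eq_abs,
      abs_of_pos h0]
    linarith
  have h := Complex.hasSum_re (Complex.hasSum_taylorSeries_neg_log hz)
  convert h using 1
  · funext n
    rw [mul_pow, ← Complex.exp_nat_mul]
    have e : (n : ℂ) * (((2 * t : ℝ) : ℂ) * Complex.I) = ((2 * n * t : ℝ) : ℂ) * Complex.I := by
      push_cast; ring
    rw [e, ← Complex.ofReal_pow, ← Complex.ofReal_natCast n, Complex.div_ofReal_re,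
      Complex.re_ofReal_mul, Complex.exp_ofReal_mul_I_re]
  · rw [Complex.neg_re, Complex.log_re]
    have : qq r t = ‖1 - (r : ℂ) * Complex.exp ((2 * t : ℝ) * Complex.I)‖ ^ 2 := by
      rw [← Complex.normSq_eq_norm_sq, Complex.normSq_apply]
      simp only [Complex.sub_re, Complex.sub_im, Complex.one_re, Complex.one_im,
        Complex.re_ofReal_mul, Complex.im_ofReal_mul, Complex.exp_ofReal_mul_I_re,
        Complex.exp_ofReal_mul_I_im]
      have h1 := Real.sin_sq_add_cos_sq (2 * t)
      have h2 := Real.cos_two_mul t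
      have h3 := Real.sin_sq_add_cos_sq t
      unfold qq
      linear_combination (-r ^ 2) * h1 + 2 * r * h2 + 4 * r * h3
    rw [this, Real.log_pow]
    push_cast; ring

lemma integral_term (n : ℕ) (hn : n ≠ 0) :
    ∫ t in (0:ℝ)..(π / 2), (π / 2 - t) ^ 3 * Real.cos (2 * n * t) = 6 * (n * bb n) := by
  have hn' : (n : ℝ) ≠ 0 := by exact_mod_cast hn
  have hd : ∀ t ∈ Set.uIcc (0:ℝ) (π / 2), HasDerivAt (fun t : ℝ =>
      (π / 2 - t) ^ 3 * (Real.sin (2 * n * t) / (2 * n))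
      - 3 * (π / 2 - t) ^ 2 * (Real.cos (2 * n * t) / (2 * n) ^ 2)
      - 6 * (π / 2 - t) * (Real.sin (2 * n * t) / (2 * n) ^ 3)
      + 6 * (Real.cos (2 * n * t) / (2 * n) ^ 4))
      ((π / 2 - t) ^ 3 * Real.cos (2 * n * t)) t := by
    intro t _
    have hl : HasDerivAt (fun t : ℝ => π / 2 - t) (-1) t := by
      simpa using (hasDerivAt_id t).const_sub (π / 2)
    have hm : HasDerivAt (fun t : ℝ => 2 * (n : ℝ) * t) (2 * n) t := by
      simpa using (hasDerivAt_id t).const_mul (2 * (n : ℝ))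
    have hs := hm.sin
    have hc := hm.cos
    have := ((((hl.pow 3).mul (hs.div_const (2 * n))).sub
      (((hl.pow 2).const_mul 3).mul (hc.div_const ((2 * n) ^ 2)))).sub
      ((hl.const_mul 6).mul (hs.div_const ((2 * n) ^ 3)))).add
      ((hc.div_const ((2 * n) ^ 4)).const_mul 6)
    refine this.congr_deriv ?_
    simp only [Pi.pow_apply]
    field_simp
    push_cast
    ring
  rw [intervalIntegral.integral_eq_sub_of_hasDerivAt hd
    (Continuous.intervalIntegrable (by fun_prop) _ _)]
  have e : 2 * (n : ℝ) * (π / 2) = n * π := by ring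
  simp only [e, Real.sin_nat_mul_pi, Real.cos_nat_mul_pi, mul_zero, Real.sin_zero, Real.cos_zero,
    sub_self, sub_zero]
  unfold bb
  field_simp
  ring

lemma hasSum_int (r : ℝ) (h0 : 0 < r) (h1 : r < 1) :
    HasSum (fun n : ℕ => r ^ n * bb n)
      (-(1 / 12) * ∫ t in (0:ℝ)..(π / 2), (π / 2 - t) ^ 3 * Real.log (qq r t)) := by
  have key := intervalIntegral.hasSum_integral_of_dominated_convergence
    (μ := volume) (a := 0) (b := π / 2)
    (F := fun (n : ℕ) (t : ℝ) => (π / 2 - t) ^ 3 * (r ^ n * Real.cos (2 * n * t) / n))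
    (f := fun t => (π / 2 - t) ^ 3 * (-(1 / 2) * Real.log (qq r t)))
    (fun n t => (π / 2) ^ 3 * r ^ n)
    (fun n => (Continuous.aestronglyMeasurable (by fun_prop)))
    (by
      intro n
      refine Filter.Eventually.of_forall fun t ht => ?_
      rw [Set.uIoc_of_le (by positivity)] at ht
      have ha : |π / 2 - t| ≤ π / 2 := by
        rw [abs_le]; constructor <;> linarith [ht.1, ht.2, Real.pi_pos]
      rw [norm_mul, norm_pow, Real.norm_eq_abs, norm_div, norm_mul, norm_pow,
        Real.norm_eq_abs r, abs_of_pos h0]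
      gcongr
      rcases Nat.eq_zero_or_pos n with rfl | hn
      · simp
      · rw [Real.norm_natCast]
        have hn' : (1:ℝ) ≤ n := by exact_mod_cast hn
        rw [div_le_iff₀ (by linarith)]
        have : ‖Real.cos (2 * n * t)‖ ≤ 1 := Real.abs_cos_le_one _
        gcongr
        linarith)
    (Filter.Eventually.of_forall fun t _ =>
      (summable_geometric_of_lt_one h0.le h1).mul_left _)
    (by simp)
    (Filter.Eventually.of_forall fun t _ => (series_qq r t h0 h1).mul_left _)
  have k2 := key.mul_left (1 / 6)
  refine hs_congr k2 ?_ ?_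
  · funext n
    rcases Nat.eq_zero_or_pos n with rfl | hn
    · simp [bb]
    · have hn' : (n : ℝ) ≠ 0 := by positivity
      have : ∀ t : ℝ, (π / 2 - t) ^ 3 * (r ^ n * Real.cos (2 * n * t) / n)
        = (r ^ n / n) * ((π / 2 - t) ^ 3 * Real.cos (2 * n * t)) := fun t => by ring
      simp only [this]
      rw [intervalIntegral.integral_const_mul, integral_term n hn.ne']
      field_simp
  · have : ∀ t : ℝ, (π / 2 - t) ^ 3 * (-(1 / 2) * Real.log (qq r t))
        = (-(1 / 2)) * ((π / 2 - t) ^ 3 * Real.log (qq r t)) := fun t => by ring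
    simp only [this]
    rw [intervalIntegral.integral_const_mul]
    ring

open Filter Topology in
lemma tendsto_int :
    Tendsto (fun r => ∫ t in (0:ℝ)..(π / 2), (π / 2 - t) ^ 3 * Real.log (qq r t)) (𝓝[<] 1)
      (𝓝 (∫ t in (0:ℝ)..(π / 2), (π / 2 - t) ^ 3 * Real.log (qq 1 t))) := by
  have hr : ∀ᶠ r : ℝ in 𝓝[<] 1, 1 / 4 < r ∧ r < 1 :=
    Ioo_mem_nhdsLT (by norm_num)
  have hls : IntervalIntegrable (fun t => Real.log (Real.sin t)) volume 0 (π / 2) :=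
    intervalIntegrable_log_sin
  apply intervalIntegral.tendsto_integral_filter_of_dominated_convergence
    (fun t => (π / 2) ^ 3 * (Real.log 5 + 2 * |Real.log (Real.sin t)|))
  · refine Eventually.of_forall fun r => ?_
    apply Measurable.aestronglyMeasurable
    unfold qq
    fun_prop
  · filter_upwards [hr] with r hr
    refine Filter.Eventually.of_forall fun t ht => ?_
    rw [Set.uIoc_of_le (by positivity)] at ht
    have ha : |π / 2 - t| ≤ π / 2 := by
      rw [abs_le]; constructor <;> linarith [ht.1, ht.2, Real.pi_pos]
    have hs : 0 < Real.sin t := Real.sin_pos_of_pos_of_lt_pi ht.1 (by linarith [ht.2, Real.pi_pos])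
    have hs1 : Real.sin t ≤ 1 := Real.sin_le_one t
    have hlow : Real.sin t ^ 2 ≤ qq r t := by
      unfold qq; nlinarith [sq_nonneg (1 - r), sq_nonneg (Real.sin t)]
    have hup : qq r t ≤ 5 := by
      unfold qq
      have : Real.sin t ^ 2 ≤ 1 := by nlinarith
      nlinarith [sq_nonneg (Real.sin t)]
    rw [norm_mul, norm_pow, Real.norm_eq_abs, Real.norm_eq_abs]
    gcongr
    have l1 := Real.log_le_log (by positivity) hlow
    have l2 := Real.log_le_log (lt_of_lt_of_le (by positivity) hlow) hup
    rw [Real.log_pow] at l1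
    push_cast at l1
    have l5 : 0 ≤ Real.log 5 := Real.log_nonneg (by norm_num)
    rw [abs_le]
    constructor
    · linarith [neg_abs_le (Real.log (Real.sin t))]
    · linarith [abs_nonneg (Real.log (Real.sin t))]
  · exact ((intervalIntegrable_const (c := Real.log 5)).add (hls.abs.const_mul 2)).const_mul _
  · refine Filter.Eventually.of_forall fun t ht => ?_
    rw [Set.uIoc_of_le (by positivity)] at ht
    have hs : 0 < Real.sin t := Real.sin_pos_of_pos_of_lt_pi ht.1 (by linarith [ht.2, Real.pi_pos])
    refine Tendsto.mono_left ?_ nhdsWithin_le_nhds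
    have hc : ContinuousAt (fun r => (π / 2 - t) ^ 3 * Real.log (qq r t)) 1 := by
      have : qq 1 t ≠ 0 := by unfold qq; positivity
      have h2 : ContinuousAt (fun r => qq r t) 1 := by unfold qq; fun_prop
      exact continuousAt_const.mul (h2.log this)
    exact hc

lemma summ (k : ℕ) (hk : 1 < k) : Summable (fun n : ℕ => 1 / (n : ℝ) ^ k) :=
  Real.summable_one_div_nat_pow.mpr hk

lemma zeta_nat (k : ℕ) (hk : 1 < k) : HasSum (fun n : ℕ => 1 / (n : ℝ) ^ k) (zetaVal k) := by
  have h := (summ k hk).hasSum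
  convert h using 1
  unfold zetaVal
  rw [← tsum_zero_pnat_eq_tsum_nat (summ k hk)]
  have : k ≠ 0 := by omega
  simp [this]

lemma hasSum_alt : HasSum (fun n : ℕ => (1 - (-1) ^ n) / (n : ℝ) ^ 5) (31 / 16 * zetaVal 5) := by
  have hz := zeta_nat 5 (by norm_num)
  have he : HasSum (fun k : ℕ => (1 + (-1) ^ (2 * k)) / ((2 * k : ℕ) : ℝ) ^ 5)
      (1 / 16 * zetaVal 5) := by
    refine hs_congr (hz.mul_left (1 / 16)) ?_ rfl
    funext k
    rw [pow_mul]
    rcases Nat.eq_zero_or_pos k with rfl | hk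
    · simp
    · push_cast
      field_simp
      norm_num
  have ho : HasSum (fun k : ℕ => (1 + (-1) ^ (2 * k + 1)) / ((2 * k + 1 : ℕ) : ℝ) ^ 5) 0 := by
    convert hasSum_zero using 1
    funext k
    rw [pow_succ, pow_mul]
    simp
  have := HasSum.even_add_odd (f := fun n : ℕ => (1 + (-1) ^ n) / (n : ℝ) ^ 5) he ho
  refine hs_congr ((hz.mul_left 2).sub this) ?_ ?_
  · funext n; ring
  · ring

lemma hasSum_bb : HasSum bb (π ^ 2 / 32 * zetaVal 3 - 31 / 256 * zetaVal 5) := by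
  refine hs_congr
    (((zeta_nat 3 (by norm_num)).mul_left (π ^ 2 / 32)).sub (hasSum_alt.mul_left (1 / 16))) rfl ?_
  ring

open Filter Topology in
lemma tendsto_sum :
    Tendsto (fun r : ℝ => ∑' n : ℕ, r ^ n * bb n) (𝓝[<] 1) (𝓝 (∑' n, bb n)) := by
  have hr : ∀ᶠ r : ℝ in 𝓝[<] 1, 0 < r ∧ r < 1 := Ioo_mem_nhdsLT (by norm_num)
  apply tendsto_tsum_of_dominated_convergence (bound := fun n => ‖bb n‖) hasSum_bb.summable.norm
  · intro n
    refine Tendsto.mono_left ?_ nhdsWithin_le_nhds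
    have : ContinuousAt (fun r : ℝ => r ^ n * bb n) 1 := by fun_prop
    simpa [ContinuousAt] using this
  · filter_upwards [hr] with r hr n
    rw [norm_mul, norm_pow, Real.norm_eq_abs, abs_of_pos hr.1]
    exact mul_le_of_le_one_left (norm_nonneg _) (pow_le_one₀ hr.1.le hr.2.le)

theorem upsilon_five_at_pi_div_two :
    -(1 / 6) * ∫ t in (0:ℝ)..(π / 2), (π / 2 - t) ^ 3 * Real.log (Real.sin t) =
      -(31 / 256) * zetaVal 5 + π ^ 2 / 32 * zetaVal 3 +
        π ^ 4 / 384 * Real.log 2 := by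
  have hls : IntervalIntegrable (fun t => Real.log (Real.sin t)) volume 0 (π / 2) :=
    intervalIntegrable_log_sin
  have h1 := tendsto_int.const_mul (-(1 / 12))
  have h2 : Filter.Tendsto (fun r : ℝ => ∑' n : ℕ, r ^ n * bb n) (nhdsWithin 1 (Set.Iio 1))
      (nhds (-(1 / 12) * ∫ t in (0:ℝ)..(π / 2), (π / 2 - t) ^ 3 * Real.log (qq 1 t))) := by
    refine h1.congr' ?_
    have hr : ∀ᶠ r : ℝ in nhdsWithin 1 (Set.Iio 1), 0 < r ∧ r < 1 := Ioo_mem_nhdsLT (by norm_num)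
    filter_upwards [hr] with r hr
    exact (hasSum_int r hr.1 hr.2).tsum_eq.symm
  have h3 := tendsto_nhds_unique h2 tendsto_sum
  rw [hasSum_bb.tsum_eq] at h3
  have h4 : ∫ t in (0:ℝ)..(π / 2), (π / 2 - t) ^ 3 * Real.log (qq 1 t) =
      ∫ t in (0:ℝ)..(π / 2), ((π / 2 - t) ^ 3 * (2 * Real.log 2)
        + 2 * ((π / 2 - t) ^ 3 * Real.log (Real.sin t))) := by
    apply intervalIntegral.integral_congr_ae
    refine Filter.Eventually.of_forall fun t ht => ?_
    rw [Set.uIoc_of_le (by positivity)] at ht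
    have hs : 0 < Real.sin t := Real.sin_pos_of_pos_of_lt_pi ht.1 (by linarith [ht.2, Real.pi_pos])
    have : qq 1 t = (2 * Real.sin t) ^ 2 := by unfold qq; ring
    rw [this, Real.log_pow, Real.log_mul two_ne_zero hs.ne']
    push_cast; ring
  have h5 : ∫ t in (0:ℝ)..(π / 2), (π / 2 - t) ^ 3 = (π / 2) ^ 4 / 4 := by
    rw [intervalIntegral.integral_comp_sub_left (fun x => x ^ 3) (π / 2), integral_pow]
    norm_num
  rw [h4, intervalIntegral.integral_add (Continuous.intervalIntegrable (by fun_prop) _ _)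
    ((hls.continuousOn_mul (Continuous.continuousOn (by fun_prop))).const_mul 2),
    intervalIntegral.integral_mul_const, intervalIntegral.integral_const_mul, h5] at h3
  linear_combination h3
end
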